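/- arXiv:1811.08647 — 5 statements merged into one kernel-verified Lean document; each statement's English description precedes it below -/
import Mathlib

section
/- For every μ > 0, λ ≥ 0, ξ ∈ ℝ and x ∈ ℝ, ∫_ℝ e^{-μ cosh y} e^{-λ cosh(x+y)} e^{i ξ sinh(x+y)} dy = ∫_0^∞ (1/v) exp(-1/(2v)) exp(-(μ² + λ² + ξ²) v / 2) e^{-μ λ v cosh x} e^{i μ ξ v sinh x} dv. -/
open MeasureTheory Real Set

lemma aux_anal {ν : Measure ℝ} (w : ℝ → NNReal) (hw : Measurable w) (X : ℝ → ℝ) (J : Set ℝ)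
    (hJ : IsOpen J) (hint : ∀ t ∈ J, Integrable (fun y => (w y : ℝ) * Real.exp (t * X y)) ν) :
    AnalyticOnNhd ℂ (fun z : ℂ => ∫ y, ((w y : ℝ) : ℂ) * Complex.exp (z * X y) ∂ν)
      {z | z.re ∈ J} := by
  have h := ProbabilityTheory.analyticOnNhd_complexMGF (X := X)
    (μ := ν.withDensity (fun x => (w x : ENNReal)))
  have hsub : J ⊆ interior (ProbabilityTheory.integrableExpSet X
      (ν.withDensity (fun x => (w x : ENNReal)))) := by
    refine interior_maximal ?_ hJ
    intro t ht
    have := (integrable_withDensity_iff_integrable_coe_smul hw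
      (g := fun y => Real.exp (t * X y)) (μ := ν)).2 (by simpa using hint t ht)
    exact this
  have h2 := h.mono (s := {z : ℂ | z.re ∈ J}) (fun z hz => hsub hz)
  have heq : (fun z : ℂ => ∫ y, ((w y : ℝ) : ℂ) * Complex.exp (z * X y) ∂ν) =
      ProbabilityTheory.complexMGF X (ν.withDensity (fun x => (w x : ENNReal))) := by
    funext z
    change _ = ∫ y, Complex.exp (z * X y) ∂(ν.withDensity (fun x => (w x : ENNReal)))
    rw [integral_withDensity_eq_integral_smul hw]
    refine integral_congr_ae (Filter.Eventually.of_forall fun y => ?_)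
    simp [NNReal.smul_def]
  rw [heq]
  exact h2

/-- The real change of variables. -/
lemma aux_real (a b : ℝ) (hb : 0 < b) :
    ∫ y : ℝ, Complex.exp ((-(a * Real.exp y + b * Real.exp (-y)) / 2 : ℝ) : ℂ) =
    ∫ v in Ioi (0:ℝ), (1 / (v : ℂ)) * Complex.exp ((-(1 / (2 * v)) - a * b * v / 2 : ℝ) : ℂ) := by
  have him : (fun y : ℝ => Real.exp y / b) '' univ = Ioi 0 := by
    ext v
    simp only [image_univ, mem_range, mem_Ioi]
    constructor
    · rintro ⟨y, rfl⟩; positivity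
    · intro hv
      refine ⟨Real.log (b * v), ?_⟩
      rw [Real.exp_log (by positivity)]; field_simp
  have hinj : InjOn (fun y : ℝ => Real.exp y / b) univ := by
    intro y _ z _ h
    simp only at h
    rw [div_left_inj' hb.ne'] at h
    exact Real.exp_injective h
  rw [← him, integral_image_eq_integral_abs_deriv_smul MeasurableSet.univ
    (f' := fun y => Real.exp y / b)
    (fun y _ => ((Real.hasDerivAt_exp y).div_const b).hasDerivWithinAt) hinj, setIntegral_univ]
  refine integral_congr_ae (Filter.Eventually.of_forall fun y => ?_)
  have hpos : 0 < Real.exp y / b := by positivity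
  have hne : ((Real.exp y / b : ℝ) : ℂ) ≠ 0 := by exact_mod_cast hpos.ne'
  simp only
  rw [abs_of_pos hpos, Complex.real_smul, ← mul_assoc, mul_one_div_cancel hne, one_mul]
  congr 2
  rw [Real.exp_neg]
  field_simp
  ring

lemma aux_int_left (m l x t : ℝ) (hm : 0 < m) (hl : 0 ≤ l) (ht : |t| < m / (4 * Real.cosh x)) :
    Integrable (fun y : ℝ => Real.exp (-(m * Real.cosh y) - l * Real.cosh (x + y)) *
      Real.exp (t * Real.sinh (x + y))) := by
  refine (integrable_exp_neg_mul_sq (b := m / 4) (by positivity)).mono'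
    (by fun_prop) (Filter.Eventually.of_forall fun y => ?_)
  rw [← Real.exp_add, Real.norm_eq_abs, Real.abs_exp, Real.exp_le_exp]
  have hx := Real.cosh_pos x
  have hy := Real.cosh_pos y
  have hxy := Real.cosh_pos (x + y)
  have h1 : Real.cosh (x + y) ≤ 2 * (Real.cosh x * Real.cosh y) := by
    have := Real.cosh_pos (x - y)
    rw [Real.cosh_sub] at this
    rw [Real.cosh_add]; linarith
  have h2 : |Real.sinh (x + y)| ≤ Real.cosh (x + y) := by
    refine abs_le_of_sq_le_sq ?_ hxy.le
    rw [Real.cosh_sq]; linarith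
  have h3 : t * Real.sinh (x + y) ≤ m / 2 * Real.cosh y := by
    calc t * Real.sinh (x + y) ≤ |t| * |Real.sinh (x + y)| := by
          rw [← abs_mul]; exact le_abs_self _
      _ ≤ m / (4 * Real.cosh x) * (2 * (Real.cosh x * Real.cosh y)) := by
          gcongr; exact h2.trans h1
      _ = m / 2 * Real.cosh y := by field_simp; ring
  have h4 : 1 + y ^ 2 / 2 ≤ Real.cosh y := by
    have h5 := Real.cosh_two_mul (y / 2)
    have h6 : (y / 2) ^ 2 ≤ Real.sinh (y / 2) ^ 2 := by
      rw [sq_le_sq, Real.abs_sinh]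
      exact Real.self_le_sinh_iff.2 (abs_nonneg _)
    rw [Real.cosh_sq, mul_div_cancel₀ _ two_ne_zero] at h5
    nlinarith
  nlinarith [mul_nonneg hl hxy.le, mul_le_mul_of_nonneg_left h4 hm.le]

lemma aux_bound (v : ℝ) (hv : 0 < v) : 1 / v * Real.exp (-(1 / (2 * v))) ≤ 2 := by
  have h := Real.add_one_le_exp (1 / (2 * v))
  rw [Real.exp_neg, ← div_eq_mul_inv, div_le_iff₀ (Real.exp_pos _)]
  have : 1 / v = 2 * (1 / (2 * v)) := by field_simp
  linarith

lemma aux_int_right (C s : ℝ) (hs : s < C / 2) :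
    IntegrableOn (fun v : ℝ => (Real.toNNReal (1 / v * Real.exp (-(1 / (2 * v)) - C * v / 2)) : ℝ) *
      Real.exp (s * v)) (Ioi 0) := by
  refine ((integrableOn_exp_mul_Ioi (a := s - C / 2) (by linarith) 0).const_mul 2).mono'
    (by fun_prop) ?_
  refine (ae_restrict_iff' measurableSet_Ioi).2 (Filter.Eventually.of_forall fun v hv => ?_)
  have hv : 0 < v := hv
  rw [Real.coe_toNNReal _ (by positivity), Real.norm_of_nonneg (by positivity)]
  have : 1 / v * Real.exp (-(1 / (2 * v)) - C * v / 2) * Real.exp (s * v) =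
      1 / v * Real.exp (-(1 / (2 * v))) * Real.exp ((s - C / 2) * v) := by
    rw [mul_assoc, mul_assoc, ← Real.exp_add, ← Real.exp_add]; ring_nf
  rw [this]
  gcongr
  exact aux_bound v hv

lemma aux_re (m x ε C : ℝ) (z : ℂ) (hm : 0 < m) (hε : ε = m / (4 * Real.cosh x)) (hC : m ^ 2 ≤ C)
    (hz : |z.re| < ε) :
    (z ^ 2 / 2 + m * Real.sinh x * z).re < C / 2 := by
  have hx := Real.one_le_cosh x
  have h2 : |Real.sinh x| ≤ Real.cosh x := by
    refine abs_le_of_sq_le_sq ?_ (by linarith)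
    rw [Real.cosh_sq]; linarith
  have hre : (z ^ 2 / 2 + m * Real.sinh x * z).re =
      (z.re ^ 2 - z.im ^ 2) / 2 + m * Real.sinh x * z.re := by
    rw [show z ^ 2 / 2 + m * Real.sinh x * z = ((1 / 2 : ℝ) : ℂ) * z ^ 2 +
      ((m * Real.sinh x : ℝ) : ℂ) * z by push_cast; ring, Complex.add_re, Complex.re_ofReal_mul,
      Complex.re_ofReal_mul, pow_two z, Complex.mul_re]
    ring
  rw [hre]
  have h3 : Real.sinh x * z.re ≤ m / 4 := by
    calc Real.sinh x * z.re ≤ |Real.sinh x| * |z.re| := by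
          rw [← abs_mul]; exact le_abs_self _
      _ ≤ Real.cosh x * (m / (4 * Real.cosh x)) := by
          rw [← hε]; gcongr
      _ = m / 4 := by field_simp
  have h4 : |z.re| ≤ m / 4 := by
    refine hz.le.trans ?_
    rw [hε]
    gcongr
    linarith
  have h5 : z.re ^ 2 ≤ (m / 4) ^ 2 := by
    rw [← sq_abs]; gcongr
  nlinarith [mul_le_mul_of_nonneg_left h3 hm.le, sq_nonneg z.im, pow_pos hm 2]

theorem aux_main (m l x : ℝ) (hm : 0 < m) (hl : 0 ≤ l) (z : ℂ) (C : ℝ)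
    (hC : C = m ^ 2 + l ^ 2 + 2 * m * l * Real.cosh x)
    (hz : |z.re| < m / (4 * Real.cosh x)) :
    ∫ y : ℝ, ((Real.toNNReal (Real.exp (-(m * Real.cosh y) - l * Real.cosh (x + y))) : ℝ) : ℂ) *
      Complex.exp (z * (Real.sinh (x + y) : ℝ)) =
    ∫ v in Ioi (0:ℝ), ((Real.toNNReal (1 / v * Real.exp (-(1 / (2 * v)) - C * v / 2)) : ℝ) : ℂ) *
      Complex.exp ((z ^ 2 / 2 + m * Real.sinh x * z) * (v : ℝ)) := by
  have hx := Real.cosh_pos x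
  set ε := m / (4 * Real.cosh x) with hε
  have hεpos : 0 < ε := by positivity
  have hCm : m ^ 2 ≤ C := by rw [hC]; nlinarith [mul_nonneg (mul_nonneg hm.le hl) hx.le, sq_nonneg l]
  have hJ : IsOpen {t : ℝ | |t| < ε} := isOpen_lt continuous_abs continuous_const
  have hF := aux_anal (ν := volume)
    (fun y => Real.toNNReal (Real.exp (-(m * Real.cosh y) - l * Real.cosh (x + y))))
    (by fun_prop) (fun y => Real.sinh (x + y)) {t | |t| < ε} hJ (fun t ht => by
      have := aux_int_left m l x t hm hl ht
      simpa only [Real.coe_toNNReal _ (Real.exp_nonneg _)] using this)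
  have hG := aux_anal (ν := volume.restrict (Ioi 0))
    (fun v => Real.toNNReal (1 / v * Real.exp (-(1 / (2 * v)) - C * v / 2)))
    (by fun_prop) (fun v => v) (Iio (C / 2)) isOpen_Iio (fun s hs => aux_int_right C s hs)
  have hG2 := hG.comp (s := {z : ℂ | z.re ∈ {t : ℝ | |t| < ε}})
    (f := fun z : ℂ => z ^ 2 / 2 + m * Real.sinh x * z)
    (fun z _ => by fun_prop) (fun z hz => aux_re m x ε C z hm hε hCm hz)
  have hconv : Convex ℝ {t : ℝ | |t| < ε} := by
    have : {t : ℝ | |t| < ε} = Ioo (-ε) ε := by ext t; simp [abs_lt]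
    rw [this]; exact convex_Ioo _ _
  refine AnalyticOnNhd.eqOn_of_preconnected_of_frequently_eq hF hG2
    (hconv.linear_preimage Complex.reLm).isPreconnected (z₀ := ((0 : ℝ) : ℂ))
    (by simpa using hεpos) ?_ hz
  have h_real : ∃ᶠ (t : ℝ) in nhdsWithin 0 {0}ᶜ,
      (∫ y : ℝ, ((Real.toNNReal (Real.exp (-(m * Real.cosh y) - l * Real.cosh (x + y))) : ℝ) : ℂ) *
      Complex.exp ((t : ℂ) * (Real.sinh (x + y) : ℝ))) =
      ∫ v in Ioi (0:ℝ), ((Real.toNNReal (1 / v * Real.exp (-(1 / (2 * v)) - C * v / 2)) : ℝ) : ℂ) *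
      Complex.exp (((t : ℂ) ^ 2 / 2 + m * Real.sinh x * t) * (v : ℝ)) := by
    refine Filter.Eventually.frequently ?_
    have hb : ∀ᶠ t : ℝ in nhds 0, 0 < m + l * Real.exp (-x) + t * Real.exp (-x) := by
      refine ContinuousAt.eventually_lt (by fun_prop) (by fun_prop) ?_
      have := Real.exp_pos (-x)
      simp only [zero_mul, add_zero]
      positivity
    filter_upwards [nhdsWithin_le_nhds hb] with t ht
    have key := aux_real (m + l * Real.exp x - t * Real.exp x) _ ht
    have hee : Real.exp x * Real.exp (-x) = 1 := by rw [← Real.exp_add]; simp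
    convert key using 1
    · refine integral_congr_ae (Filter.Eventually.of_forall fun y => ?_)
      simp only [Real.coe_toNNReal _ (Real.exp_nonneg _)]
      rw [← Complex.ofReal_mul, Complex.ofReal_exp, ← Complex.exp_add, ← Complex.ofReal_add]
      congr 2
      rw [Real.cosh_eq, Real.cosh_eq, Real.sinh_eq, neg_add, Real.exp_add, Real.exp_add]
      ring
    · refine setIntegral_congr_fun measurableSet_Ioi fun v hv => ?_
      have hv : 0 < v := hv
      rw [Real.coe_toNNReal _ (by positivity), Complex.ofReal_mul, Complex.ofReal_exp, mul_assoc,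
        ← Complex.exp_add, hC]
      push_cast
      congr 2
      have hee' : Complex.exp x * Complex.exp (-x) = 1 := by rw [← Complex.exp_add]; simp
      rw [Complex.cosh, Complex.sinh]
      linear_combination (v / 2 * (l ^ 2 - t ^ 2) : ℂ) * hee'
  rw [Filter.frequently_iff_seq_forall] at h_real ⊢
  obtain ⟨xs, hx_tendsto, hx_eq⟩ := h_real
  refine ⟨fun n ↦ xs n, ?_, fun n ↦ ?_⟩
  · rw [tendsto_nhdsWithin_iff] at hx_tendsto ⊢
    constructor
    · exact (Complex.continuous_ofReal.tendsto 0).comp hx_tendsto.1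
    · simpa using hx_tendsto.2
  · exact hx_eq n

theorem stmt_1 (μ lam ξ x : ℝ) (hμ : 0 < μ) (hlam : 0 ≤ lam) :
    ∫ y : ℝ,
        Complex.exp (-((μ * Real.cosh y : ℝ) : ℂ)) *
          Complex.exp (-((lam * Real.cosh (x + y) : ℝ) : ℂ)) *
          Complex.exp (Complex.I * ((ξ * Real.sinh (x + y) : ℝ) : ℂ))
      = ∫ v in Ioi (0:ℝ),
          (1 / (v : ℂ)) * Complex.exp (-((1 / (2 * v) : ℝ) : ℂ)) *
            Complex.exp (-(((μ ^ 2 + lam ^ 2 + ξ ^ 2) * v / 2 : ℝ) : ℂ)) *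
            Complex.exp (-((μ * lam * v * Real.cosh x : ℝ) : ℂ)) *
            Complex.exp (Complex.I * ((μ * ξ * v * Real.sinh x : ℝ) : ℂ)) := by
  have hx := Real.cosh_pos x
  have key := aux_main μ lam x hμ hlam (Complex.I * ξ) _ rfl (by simp; positivity)
  convert key using 1
  · refine integral_congr_ae (Filter.Eventually.of_forall fun y => ?_)
    simp only [Real.coe_toNNReal _ (Real.exp_nonneg _)]
    rw [Complex.ofReal_exp, ← Complex.exp_add, ← Complex.exp_add, ← Complex.exp_add]
    congr 1
    push_cast
    ring
  · refine setIntegral_congr_fun measurableSet_Ioi fun v hv => ?_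
    have hv : 0 < v := hv
    rw [Real.coe_toNNReal _ (by positivity), Complex.ofReal_mul (1 / v), Complex.ofReal_exp, mul_assoc,
      mul_assoc, mul_assoc, mul_assoc,
      ← Complex.exp_add, ← Complex.exp_add, ← Complex.exp_add, mul_assoc ((1 / v : ℝ) : ℂ),
      ← Complex.exp_add]
    push_cast
    congr 2
    linear_combination (-(v * ξ ^ 2 / 2) : ℂ) * Complex.I_sq
end

section
/- For every ξ ∈ ℝ with ξ ≠ 0 and every b ∈ ℝ with b ≠ 0, ∫_ℝ cos(ξ x) / (cosh b + cosh x) dx = 2π sin(ξ b) / (sinh(π ξ) sinh b). -/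
open MeasureTheory Real Set

lemma aux_integrable : Integrable (fun x : ℝ => sigmoid x * (1 - sigmoid x)) := by
  have h := (integrableOn_image_iff_integrableOn_abs_deriv_smul (f := sigmoid)
    (f' := fun x => sigmoid x * (1 - sigmoid x)) (s := univ) MeasurableSet.univ
    (fun x _ => (hasDerivAt_sigmoid x).hasDerivWithinAt) sigmoid_injective.injOn
    (fun _ => (1 : ℝ))).1 (by
      rw [image_univ, range_sigmoid]
      exact integrableOn_const (by simp))
  rw [integrableOn_univ] at h
  refine h.congr (Filter.Eventually.of_forall fun x => ?_)
  have : 0 ≤ sigmoid x * (1 - sigmoid x) :=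
    mul_nonneg (sigmoid_nonneg x) (by linarith [sigmoid_le_one x])
  simp only [smul_eq_mul, mul_one]
  exact abs_of_nonneg this

lemma aux_cpow (ξ x : ℝ) : ((sigmoid x : ℝ) : ℂ) ^ (1 + Complex.I * ξ - 1) *
    (1 - ((sigmoid x : ℝ) : ℂ)) ^ (1 - Complex.I * ξ - 1) = Complex.exp (Complex.I * ξ * x) := by
  have h0 := sigmoid_pos x
  have h1 : 1 - sigmoid x = sigmoid x * Real.exp (-x) := by
    rw [sigmoid_mul_rexp_neg, sigmoid_neg]
  have h2 : 0 < sigmoid x * Real.exp (-x) := by positivity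
  have h3 : (1 - ((sigmoid x : ℝ) : ℂ)) = ((sigmoid x * Real.exp (-x) : ℝ) : ℂ) := by
    rw [← h1]; push_cast; rfl
  rw [h3, Complex.cpow_def_of_ne_zero (by exact_mod_cast h0.ne'),
    Complex.cpow_def_of_ne_zero (by exact_mod_cast h2.ne'), ← Complex.exp_add,
    ← Complex.ofReal_log h0.le, ← Complex.ofReal_log h2.le,
    Real.log_mul h0.ne' (Real.exp_pos _).ne', Real.log_exp]
  congr 1
  push_cast
  ring

lemma aux_F (ξ : ℝ) (hξ : ξ ≠ 0) :
    ∫ x : ℝ, Complex.exp (Complex.I * ξ * x) * ((sigmoid x * (1 - sigmoid x) : ℝ) : ℂ)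
      = ((π * ξ / Real.sinh (π * ξ) : ℝ) : ℂ) := by
  have hG := Complex.Gamma_mul_Gamma_eq_betaIntegral (s := 1 + Complex.I * ξ)
    (t := 1 - Complex.I * ξ) (by simp) (by simp)
  have e2 : (1 + Complex.I * ξ) + (1 - Complex.I * ξ) = (1 : ℂ) + 1 := by ring
  have hI : Complex.I * ξ ≠ 0 := mul_ne_zero Complex.I_ne_zero (by exact_mod_cast hξ)
  rw [e2, Complex.Gamma_add_one 1 one_ne_zero, Complex.Gamma_one, one_mul, one_mul,
    add_comm 1 (Complex.I * (ξ : ℂ)), Complex.Gamma_add_one _ hI, mul_assoc,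
    Complex.Gamma_mul_Gamma_one_sub, add_comm (Complex.I * (ξ : ℂ)) 1] at hG
  have hB : Complex.betaIntegral (1 + Complex.I * ξ) (1 - Complex.I * ξ) =
      ∫ x : ℝ, Complex.exp (Complex.I * ξ * x) * ((sigmoid x * (1 - sigmoid x) : ℝ) : ℂ) := by
    rw [Complex.betaIntegral, intervalIntegral.integral_of_le zero_le_one,
      integral_Ioc_eq_integral_Ioo, ← range_sigmoid, ← image_univ,
      integral_image_eq_integral_abs_deriv_smul (f := sigmoid)
    (f' := fun x => sigmoid x * (1 - sigmoid x)) (s := univ) MeasurableSet.univ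
    (fun x _ => (hasDerivAt_sigmoid x).hasDerivWithinAt) sigmoid_injective.injOn,
      setIntegral_univ]
    congr 1
    ext x
    have : 0 ≤ sigmoid x * (1 - sigmoid x) :=
      mul_nonneg (sigmoid_nonneg x) (by linarith [sigmoid_le_one x])
    rw [aux_cpow, abs_of_nonneg this, Complex.real_smul, mul_comm]
  rw [← hB, ← hG]
  have e3 : (π : ℂ) * (Complex.I * ξ) = ((π * ξ : ℝ) : ℂ) * Complex.I := by push_cast; ring
  have hs : (Real.sinh (π * ξ) : ℂ) ≠ 0 := by
    exact_mod_cast fun h => (mul_ne_zero pi_ne_zero hξ) (Real.sinh_eq_zero.1 h)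
  rw [e3, Complex.sin_mul_I, ← Complex.ofReal_sinh, Complex.ofReal_div]
  have := Complex.I_ne_zero
  field_simp
  push_cast
  ring

lemma aux_g (b x : ℝ) : sigmoid (x + b) - sigmoid (x - b) =
    Real.sinh b / (Real.cosh b + Real.cosh x) := by
  have h1 : 0 < Real.cosh b + Real.cosh x := by positivity
  rw [sigmoid_def, sigmoid_def, Real.sinh_eq]
  rw [Real.cosh_eq, Real.cosh_eq] at *
  have hx := Real.exp_pos x
  have hb := Real.exp_pos b
  rw [neg_add, neg_sub, sub_eq_add_neg b x, Real.exp_add, Real.exp_add]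
  rw [Real.exp_neg, Real.exp_neg] at *
  field_simp
  ring

lemma aux_d (x : ℝ) : sigmoid x * (1 - sigmoid x) = 1 / (2 * (1 + Real.cosh x)) := by
  have h1 : 0 < 1 + Real.cosh x := by positivity
  rw [sigmoid_def]
  rw [Real.cosh_eq] at *
  have hx := Real.exp_pos x
  rw [Real.exp_neg] at *
  field_simp
  ring

lemma aux_k (b : ℝ) : Integrable (fun x : ℝ => 1 / (Real.cosh b + Real.cosh x)) := by
  refine (aux_integrable.const_mul 2).mono' ?_ (Filter.Eventually.of_forall fun x => ?_)
  · refine Continuous.aestronglyMeasurable (continuous_const.div (by fun_prop) fun x => ?_)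
    have := Real.cosh_pos b
    have := Real.cosh_pos x
    positivity
  · have h1 := Real.one_le_cosh b
    have h2 := Real.cosh_pos x
    rw [aux_d, Real.norm_of_nonneg (by positivity)]
    have : 2 * (1 / (2 * (1 + Real.cosh x))) = 1 / (1 + Real.cosh x) := by field_simp
    rw [this]
    gcongr

lemma aux_exp {f : ℝ → ℝ} (hf : Integrable f) (ξ : ℝ) :
    Integrable (fun x : ℝ => Complex.exp (Complex.I * ξ * x) * ((f x : ℝ) : ℂ)) := by
  refine Integrable.bdd_mul (c := 1) hf.ofReal (by fun_prop) (Filter.Eventually.of_forall fun x => ?_)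
  have : Complex.I * ξ * x = ((ξ * x : ℝ) : ℂ) * Complex.I := by push_cast; ring
  rw [this, Complex.norm_exp_ofReal_mul_I]

lemma aux_shift (ξ c : ℝ) (hξ : ξ ≠ 0) :
    ∫ x : ℝ, Complex.exp (Complex.I * ξ * x) *
      ((sigmoid (x + c) * (1 - sigmoid (x + c)) : ℝ) : ℂ)
      = Complex.exp (-(Complex.I * ξ * c)) * ((π * ξ / Real.sinh (π * ξ) : ℝ) : ℂ) := by
  rw [← aux_F ξ hξ, ← integral_const_mul, 
    ← integral_add_right_eq_self (fun x : ℝ => Complex.exp (-(Complex.I * ξ * c)) *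
      (Complex.exp (Complex.I * ξ * x) * ((sigmoid x * (1 - sigmoid x) : ℝ) : ℂ))) c]
  congr 1
  ext x
  rw [← mul_assoc, ← Complex.exp_add]
  congr 2
  push_cast
  ring

theorem stmt_7 (ξ b : ℝ) (hξ : ξ ≠ 0) (hb : b ≠ 0) :
    ∫ x : ℝ, Real.cos (ξ * x) / (Real.cosh b + Real.cosh x)
      = 2 * π * Real.sin (ξ * b) / (Real.sinh (π * ξ) * Real.sinh b) := by
  have hsb : Real.sinh b ≠ 0 := fun h => hb (Real.sinh_eq_zero.1 h)
  have hs : Real.sinh (π * ξ) ≠ 0 :=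
    fun h => (mul_ne_zero pi_ne_zero hξ) (Real.sinh_eq_zero.1 h)
  have hIc : Complex.I * ξ ≠ 0 := mul_ne_zero Complex.I_ne_zero (by exact_mod_cast hξ)
  have hgi : Integrable (fun x : ℝ => sigmoid (x + b) - sigmoid (x - b)) := by
    refine ((aux_k b).const_mul (Real.sinh b)).congr (Filter.Eventually.of_forall fun x => ?_)
    simp only [aux_g]
    ring
  have hd1 := aux_integrable.comp_add_right b
  have hd2 := aux_integrable.comp_add_right (-b)
  have hu : ∀ x : ℝ, HasDerivAt (fun x : ℝ => Complex.exp (Complex.I * ξ * x))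
      (Complex.I * ξ * Complex.exp (Complex.I * ξ * x)) x := by
    intro x
    have h1 : HasDerivAt (fun x : ℝ => Complex.I * ξ * (x : ℂ)) (Complex.I * ξ * 1) x :=
      (Complex.ofRealCLM.hasDerivAt (x := x)).const_mul _
    convert h1.cexp using 1
    ring
  have hv : ∀ x : ℝ, HasDerivAt (fun x : ℝ => ((sigmoid (x + b) - sigmoid (x - b) : ℝ) : ℂ))
      ((sigmoid (x + b) * (1 - sigmoid (x + b)) -
        sigmoid (x + -b) * (1 - sigmoid (x + -b)) : ℝ) : ℂ) x := by
    intro x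
    refine HasDerivAt.ofReal_comp ?_
    exact ((hasDerivAt_sigmoid (x + b)).comp_add_const x b).sub
      ((hasDerivAt_sigmoid (x + -b)).comp_add_const x (-b))
  have hparts := integral_mul_deriv_eq_deriv_mul_of_integrable (fun x _ => hu x) (fun x _ => hv x)
    (aux_exp (hd1.sub hd2) ξ)
    (by
      refine ((aux_exp hgi ξ).const_mul (Complex.I * ξ)).congr
        (Filter.Eventually.of_forall fun x => ?_)
      simp only [Pi.mul_apply]
      ring)
    (aux_exp hgi ξ)
  have hL : ∫ x : ℝ, Complex.exp (Complex.I * ξ * x) *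
      ((sigmoid (x + b) * (1 - sigmoid (x + b)) -
        sigmoid (x + -b) * (1 - sigmoid (x + -b)) : ℝ) : ℂ) =
      Complex.exp (-(Complex.I * ξ * b)) * ((π * ξ / Real.sinh (π * ξ) : ℝ) : ℂ) -
      Complex.exp (-(Complex.I * ξ * (-b : ℝ))) * ((π * ξ / Real.sinh (π * ξ) : ℝ) : ℂ) := by
    rw [← aux_shift ξ b hξ, ← aux_shift ξ (-b) hξ, ← integral_sub (aux_exp hd1 ξ) (aux_exp hd2 ξ)]
    congr 1
    ext x
    push_cast
    ring
  have hR : ∫ x : ℝ, Complex.I * ξ * Complex.exp (Complex.I * ξ * x) *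
      ((sigmoid (x + b) - sigmoid (x - b) : ℝ) : ℂ) = Complex.I * ξ * Real.sinh b *
      ∫ x : ℝ, Complex.exp (Complex.I * ξ * x) * ((1 / (Real.cosh b + Real.cosh x) : ℝ) : ℂ) := by
    rw [← integral_const_mul]
    congr 1
    ext x
    rw [aux_g]
    push_cast
    ring
  rw [hL, hR] at hparts
  have hJ : ∫ x : ℝ, Complex.exp (Complex.I * ξ * x) *
      ((1 / (Real.cosh b + Real.cosh x) : ℝ) : ℂ) =
      ((2 * π * Real.sin (ξ * b) / (Real.sinh (π * ξ) * Real.sinh b) : ℝ) : ℂ) := by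
    have hne : Complex.I * ξ * Real.sinh b ≠ 0 := mul_ne_zero hIc (by exact_mod_cast hsb)
    apply mul_left_cancel₀ hne
    rw [eq_neg_iff_add_eq_zero, add_comm] at hparts
    rw [eq_neg_of_add_eq_zero_left hparts]
    have e1 : -(Complex.I * ξ * b) = ((-(ξ * b) : ℝ) : ℂ) * Complex.I := by push_cast; ring
    have e2 : -(Complex.I * ξ * (-b : ℝ)) = ((ξ * b : ℝ) : ℂ) * Complex.I := by push_cast; ring
    rw [e1, e2, Complex.exp_mul_I, Complex.exp_mul_I, ← Complex.ofReal_cos, ← Complex.ofReal_sin,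
      ← Complex.ofReal_cos, ← Complex.ofReal_sin, Real.cos_neg, Real.sin_neg]
    have hs' : (Real.sinh (π * ξ) : ℂ) ≠ 0 := by exact_mod_cast hs
    have hsb' : (Real.sinh b : ℂ) ≠ 0 := by exact_mod_cast hsb
    simp only [Complex.ofReal_div, Complex.ofReal_mul, Complex.ofReal_neg, Complex.ofReal_ofNat]
    field_simp
    ring
  have hre := integral_re (aux_exp (aux_k b) ξ)
  rw [hJ] at hre
  simp only [RCLike.re_to_complex, Complex.ofReal_re] at hre
  rw [← hre]
  congr 1
  ext x
  have e : Complex.I * ξ * x = ((ξ * x : ℝ) : ℂ) * Complex.I := by push_cast; ring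
  rw [Complex.re_mul_ofReal, e, Complex.exp_ofReal_mul_I_re]
  ring
end

section
/- For every ξ ∈ ℝ and b > 0, ∫_0^∞ e^{-u cosh b} K_{iξ}(u) du = π sin(ξ b) / (sinh(π ξ) sinh b), where K_{iξ}(u) := (1/2) ∫_ℝ e^{-u cosh x} cos(ξ x) dx, and for ξ = 0 the right-hand side is interpreted as b / sinh b. -/
open MeasureTheory Real Set

namespace KL

noncomputable def w (y : ℝ) : ℝ := sigmoid y * (1 - sigmoid y)

lemma w_nonneg (y : ℝ) : 0 ≤ w y :=
  mul_nonneg (sigmoid_nonneg y) (by linarith [sigmoid_le_one y])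

lemma w_cont : Continuous w := by
  unfold w
  have := continuous_sigmoid
  fun_prop

lemma w_eq (y : ℝ) : w y = 1 / (2 + 2 * Real.cosh y) := by
  unfold w
  rw [sigmoid_def, Real.cosh_eq, Real.exp_neg]
  have := Real.exp_pos y
  field_simp
  ring

lemma w_int : Integrable w := by
  have h := integrableOn_image_iff_integrableOn_abs_deriv_smul (s := univ) (f := sigmoid)
    (f' := w) MeasurableSet.univ (fun x _ => (hasDerivAt_sigmoid x).hasDerivWithinAt)
    sigmoid_injective.injOn (fun _ => (1 : ℝ))
  rw [image_univ, range_sigmoid] at h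
  have h2 := h.1 (by simp)
  rw [integrableOn_univ] at h2
  simpa [abs_of_nonneg (w_nonneg _)] using h2

noncomputable def g (ξ : ℝ) : ℝ := if ξ = 0 then 1 else π * ξ / Real.sinh (π * ξ)

lemma cpow_aux (ξ y : ℝ) : ((sigmoid y : ℝ) : ℂ) ^ ((1 + ξ * Complex.I) - 1 : ℂ) *
    (1 - ((sigmoid y : ℝ) : ℂ)) ^ ((1 - ξ * Complex.I) - 1 : ℂ) = Complex.exp (ξ * y * Complex.I) := by
  have h1 := sigmoid_pos y
  have h2 : 0 < 1 - sigmoid y := by linarith [sigmoid_lt_one y]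
  have e : (1 - ((sigmoid y : ℝ) : ℂ)) = ((1 - sigmoid y : ℝ) : ℂ) := by push_cast; rfl
  have hl : Real.log (sigmoid y) = y + Real.log (1 - sigmoid y) := by
    rw [← sigmoid_neg, ← sigmoid_mul_rexp_neg, Real.log_mul h1.ne' (Real.exp_pos _).ne',
      Real.log_exp]
    ring
  rw [e, Complex.cpow_def_of_ne_zero (by exact_mod_cast h1.ne'),
    Complex.cpow_def_of_ne_zero (by exact_mod_cast h2.ne'), ← Complex.exp_add,
    ← Complex.ofReal_log h1.le, ← Complex.ofReal_log h2.le, hl]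
  congr 1
  push_cast
  ring

lemma beta_eq (ξ : ℝ) : Complex.betaIntegral (1 + ξ * Complex.I) (1 - ξ * Complex.I) = (g ξ : ℂ) := by
  have h := Complex.Gamma_mul_Gamma_eq_betaIntegral (s := 1 + ξ * Complex.I)
    (t := 1 - ξ * Complex.I) (by simp) (by simp)
  have e : (1 + ξ * Complex.I) + (1 - ξ * Complex.I) = ((1 : ℕ) + 1 : ℂ) := by push_cast; ring
  rw [e, Complex.Gamma_nat_eq_factorial] at h
  simp only [Nat.factorial_one, Nat.cast_one, one_mul] at h
  rw [← h]
  unfold g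
  split_ifs with h0
  · simp [h0]
  · have hx : (ξ * Complex.I : ℂ) ≠ 0 := by simp [h0]
    rw [add_comm, Complex.Gamma_add_one _ hx, mul_assoc, Complex.Gamma_mul_Gamma_one_sub,
      ← mul_assoc, Complex.sin_mul_I]
    push_cast
    have hs : Complex.sinh (π * ξ) ≠ 0 := by
      rw [← Complex.ofReal_mul, ← Complex.ofReal_sinh, Complex.ofReal_ne_zero]
      rw [Ne, Real.sinh_eq_zero]
      exact mul_ne_zero pi_ne_zero h0
    field_simp [Complex.I_ne_zero]

lemma four (ξ : ℝ) : ∫ y : ℝ, (w y : ℂ) * Complex.exp (ξ * y * Complex.I) = (g ξ : ℂ) := by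
  rw [← beta_eq, Complex.betaIntegral, intervalIntegral.integral_of_le zero_le_one,
    integral_Ioc_eq_integral_Ioo]
  have h := integral_image_eq_integral_abs_deriv_smul (s := univ) (f := sigmoid)
    (f' := w) MeasurableSet.univ (fun x _ => (hasDerivAt_sigmoid x).hasDerivWithinAt)
    sigmoid_injective.injOn (fun x : ℝ => (x : ℂ) ^ ((1 + ξ * Complex.I) - 1 : ℂ) *
      (1 - (x : ℂ)) ^ ((1 - ξ * Complex.I) - 1 : ℂ))
  rw [image_univ, range_sigmoid] at h
  rw [h, Measure.restrict_univ]
  congr 1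
  ext y
  rw [cpow_aux, abs_of_nonneg (w_nonneg y), Complex.real_smul]

lemma shift (ξ t : ℝ) : ∫ x : ℝ, w (x + t) * Real.cos (ξ * x) = Real.cos (ξ * t) * g ξ := by
  have h1 : ∫ x : ℝ, (w (x + t) : ℂ) * Complex.exp (ξ * x * Complex.I)
      = Complex.exp (-(ξ * t * Complex.I)) * (g ξ : ℂ) := by
    rw [← four, ← integral_const_mul, ← integral_add_right_eq_self
      (fun x : ℝ => Complex.exp (-(ξ * t * Complex.I)) *
        ((w x : ℂ) * Complex.exp (ξ * x * Complex.I))) t]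
    congr 1
    ext x
    rw [mul_left_comm, ← Complex.exp_add]
    congr 2
    push_cast
    ring
  have hi : Integrable (fun x : ℝ => (w (x + t) : ℂ) * Complex.exp (ξ * x * Complex.I)) := by
    refine Integrable.mul_bdd (c := 1) (w_int.comp_add_right t).ofReal ?_ ?_
    · exact (by fun_prop : Continuous _).aestronglyMeasurable
    · refine Filter.Eventually.of_forall fun x => ?_
      rw [← Complex.ofReal_mul, Complex.norm_exp_ofReal_mul_I]
  have h2 := integral_re hi
  rw [h1] at h2
  have e (x : ℝ) : RCLike.re ((w (x + t) : ℂ) * Complex.exp (ξ * x * Complex.I)) =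
      w (x + t) * Real.cos (ξ * x) := by
    rw [RCLike.re_to_complex, Complex.re_ofReal_mul, ← Complex.ofReal_mul,
      Complex.exp_ofReal_mul_I_re]
  simp only [e] at h2
  rw [h2, RCLike.re_to_complex, Complex.re_mul_ofReal, ← neg_mul, ← Complex.ofReal_mul,
    ← Complex.ofReal_neg, Complex.exp_ofReal_mul_I_re, Real.cos_neg]

lemma inner_int (b x : ℝ) (hb : 0 < b) :
    ∫ t in (-b)..b, w (x + t) = Real.sinh b / (Real.cosh x + Real.cosh b) := by
  have h := intervalIntegral.integral_eq_sub_of_hasDerivAt (a := -b) (b := b)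
    (f := fun t => sigmoid (x + t)) (f' := fun t => w (x + t))
    (fun t _ => HasDerivAt.comp_const_add x t (hasDerivAt_sigmoid (x + t)))
    ((w_cont.comp (by fun_prop : Continuous fun t => x + t)).intervalIntegrable _ _)
  rw [h]
  simp only [sigmoid_def, Real.cosh_eq, Real.sinh_eq, neg_add, neg_neg, Real.exp_add, Real.exp_neg]
  have h1 := Real.exp_pos x
  have h2 := Real.exp_pos b
  field_simp
  ring

lemma prod_int (ξ b : ℝ) : Integrable (Function.uncurry fun t x : ℝ => w (x + t) * Real.cos (ξ * x))
    ((volume.restrict (Set.uIoc (-b) b)).prod volume) := by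
  have hw := w_cont
  have h1 : Integrable (fun p : ℝ × ℝ => w (p.2 + p.1))
      ((volume.restrict (Set.uIoc (-b) b)).prod volume) := by
    rw [integrable_prod_iff (by fun_prop : Continuous _).aestronglyMeasurable]
    constructor
    · exact Filter.Eventually.of_forall fun t => w_int.comp_add_right t
    · simp only [integral_add_right_eq_self (fun x => ‖w x‖)]
      have : IsFiniteMeasure (volume.restrict (Set.uIoc (-b) b)) :=
        ⟨by rw [Measure.restrict_apply_univ, Set.uIoc]; exact measure_Ioc_lt_top⟩
      exact integrable_const _
  refine Integrable.mul_bdd (c := 1) h1 (by fun_prop : Continuous _).aestronglyMeasurable ?_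
  exact Filter.Eventually.of_forall fun p => Real.abs_cos_le_one _

lemma cosint (ξ b : ℝ) (hb : 0 < b) :
    ∫ x : ℝ, Real.cos (ξ * x) / (Real.cosh x + Real.cosh b)
      = (∫ t in (-b)..b, Real.cos (ξ * t)) * g ξ / Real.sinh b := by
  have h := intervalIntegral_integral_swap (prod_int ξ b)
  simp only [shift, intervalIntegral.integral_mul_const, inner_int b _ hb] at h
  rw [h, ← integral_div]
  congr 1
  ext x
  have := Real.sinh_pos_iff.2 hb
  field_simp

lemma prod_int2 (ξ b : ℝ) : Integrable (Function.uncurry fun u x : ℝ =>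
    Real.exp (-(Real.cosh x + Real.cosh b) * u) * Real.cos (ξ * x))
    ((volume.restrict (Ioi 0)).prod volume) := by
  have hn (x : ℝ) : -(Real.cosh x + Real.cosh b) < 0 := by
    linarith [Real.cosh_pos x, Real.cosh_pos b]
  have h1 : Integrable (fun p : ℝ × ℝ => Real.exp (-(Real.cosh p.2 + Real.cosh b) * p.1))
      ((volume.restrict (Ioi 0)).prod volume) := by
    rw [integrable_prod_iff' (by fun_prop : Continuous _).aestronglyMeasurable]
    constructor
    · exact Filter.Eventually.of_forall fun x => integrableOn_exp_mul_Ioi (hn x) 0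
    · simp only [Real.norm_eq_abs, Real.abs_exp]
      simp only [fun x => integral_exp_mul_Ioi (hn x) 0]
      refine (w_int.const_mul 2).mono' ?_ ?_
      · refine Continuous.aestronglyMeasurable ?_
        exact Continuous.div (by fun_prop) (by fun_prop) fun x => (hn x).ne
      · refine Filter.Eventually.of_forall fun x => ?_
        rw [w_eq, mul_zero, Real.exp_zero, neg_div_neg_eq, Real.norm_eq_abs,
          abs_of_nonneg (one_div_pos.2 (by linarith [hn x])).le]
        have := Real.cosh_pos x
        have h3 := Real.one_le_cosh b
        rw [mul_one_div, div_le_div_iff₀ (by linarith) (by linarith)]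
        linarith
  refine Integrable.mul_bdd (c := 1) h1 (by fun_prop : Continuous _).aestronglyMeasurable ?_
  exact Filter.Eventually.of_forall fun p => Real.abs_cos_le_one _

end KL

theorem stmt_9 (ξ b : ℝ) (hb : 0 < b) :
    ∫ u in Ioi (0:ℝ),
        Real.exp (-u * Real.cosh b) * ((1 / 2) * ∫ x : ℝ, Real.exp (-u * Real.cosh x) * Real.cos (ξ * x))
      = if ξ = 0 then b / Real.sinh b
        else π * Real.sin (ξ * b) / (Real.sinh (π * ξ) * Real.sinh b) := by
  have hn (x : ℝ) : -(Real.cosh x + Real.cosh b) < 0 := by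
    linarith [Real.cosh_pos x, Real.cosh_pos b]
  have e (u : ℝ) : Real.exp (-u * Real.cosh b) *
      ((1 / 2) * ∫ x : ℝ, Real.exp (-u * Real.cosh x) * Real.cos (ξ * x)) =
      (1 / 2) * ∫ x : ℝ, Real.exp (-(Real.cosh x + Real.cosh b) * u) * Real.cos (ξ * x) := by
    rw [mul_left_comm, ← integral_const_mul]
    congr 2
    ext x
    rw [← mul_assoc, ← Real.exp_add]
    congr 2
    ring
  simp only [e]
  rw [integral_const_mul, integral_integral_swap (KL.prod_int2 ξ b)]
  simp only [integral_mul_const, fun x => integral_exp_mul_Ioi (hn x) 0]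
  have e2 (x : ℝ) : -Real.exp (-(Real.cosh x + Real.cosh b) * 0) / -(Real.cosh x + Real.cosh b) *
      Real.cos (ξ * x) = Real.cos (ξ * x) / (Real.cosh x + Real.cosh b) := by
    rw [mul_zero, Real.exp_zero, neg_div_neg_eq, one_div_mul_eq_div]
  simp only [e2]
  rw [KL.cosint ξ b hb, KL.g]
  have hs := Real.sinh_pos_iff.2 hb
  split_ifs with h0
  · simp [h0]
    ring
  · have hs2 : Real.sinh (π * ξ) ≠ 0 := by
      rw [Ne, Real.sinh_eq_zero]
      exact mul_ne_zero pi_ne_zero h0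
    rw [intervalIntegral.integral_comp_mul_left (fun x => Real.cos x) h0, integral_cos, mul_neg, Real.sin_neg, smul_eq_mul]
    field_simp
    ring
end

section
/- Let C be a standard Cauchy random variable and ε an independent Rademacher variable (P(ε = 1) = P(ε = -1) = 1/2). Then for every a ∈ ℝ with |a| ≥ 1 and every θ ∈ [-1, 1], the random variable aC + θ√(1 + a²C²) ε has the same distribution as (a + θ√(a² − 1) ε) C. Equivalently, both have characteristic function ξ ↦ exp(−|aξ|) cosh(θ ξ √(a² − 1)). -/
open MeasureTheory Real Set ProbabilityTheory
open scoped ENNReal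

lemma aux_arg (x : ℝ) : Complex.arg (1 + x * Complex.I) = arctan x := by
  symm
  apply Real.arctan_eq_of_tan_eq
  · rw [Complex.tan_arg]; simp
  · have h : |Complex.arg (1 + x * Complex.I)| < π / 2 := by
      rw [Complex.abs_arg_lt_pi_div_two_iff]
      left; simp
    exact abs_lt.mp h

lemma aux_arg2 (x y : ℝ) :
    arctan x + arctan y = Complex.arg ((1 + x * Complex.I) * (1 + y * Complex.I)) := by
  have h0 : ∀ x : ℝ, (1 + x * Complex.I) ≠ 0 := by
    intro x h
    have := congrArg Complex.re h
    simp at this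
  have h1 := arctan_lt_pi_div_two x
  have h2 := arctan_lt_pi_div_two y
  have h3 := neg_pi_div_two_lt_arctan x
  have h4 := neg_pi_div_two_lt_arctan y
  rw [Complex.arg_mul (h0 x) (h0 y), aux_arg, aux_arg]
  rw [aux_arg, aux_arg]
  constructor <;> linarith

lemma aux_arctan (x y z w k : ℝ) (hk : 0 < k) (h1 : 1 - x * y = k * (1 - z * w))
    (h2 : x + y = k * (z + w)) : arctan x + arctan y = arctan z + arctan w := by
  rw [aux_arg2, aux_arg2 z w, ← Complex.arg_real_mul ((1 + z * Complex.I) * (1 + w * Complex.I)) hk]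
  congr 1
  apply Complex.ext
  · simp; linarith
  · simp; linarith

noncomputable def cau : Measure ℝ :=
  volume.withDensity (fun x => ENNReal.ofReal (1 / (π * (1 + x ^ 2))))

lemma cau_Iic (x : ℝ) : cau (Iic x) = ENNReal.ofReal (π⁻¹ * (arctan x + π / 2)) := by
  have e : (fun x : ℝ => 1 / (π * (1 + x ^ 2))) = fun x => π⁻¹ * (1 + x ^ 2)⁻¹ := by
    ext x; rw [one_div, mul_inv]
  rw [cau, withDensity_apply _ measurableSet_Iic, ← ofReal_integral_eq_lintegral_ofReal, e,
    integral_const_mul, integral_Iic_inv_one_add_sq]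
  · rw [e]; exact (integrable_inv_one_add_sq.const_mul _).integrableOn
  · refine ae_of_all _ fun x => ?_
    have := pi_pos
    simp only [Pi.zero_apply]; positivity

lemma sqrt_lip (u v : ℝ) (h : u < v) : |√(1 + v ^ 2) - √(1 + u ^ 2)| ≤ v - u := by
  have h1 := Real.sq_sqrt (show 0 ≤ 1 + v ^ 2 by positivity)
  have h2 := Real.sq_sqrt (show 0 ≤ 1 + u ^ 2 by positivity)
  have h3 : |v| ≤ √(1 + v ^ 2) := Real.abs_le_sqrt (by linarith)
  have h4 : |u| ≤ √(1 + u ^ 2) := Real.abs_le_sqrt (by linarith)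
  have h5 : 0 < √(1 + v ^ 2) := Real.sqrt_pos.mpr (by positivity)
  have h6 : 0 < √(1 + u ^ 2) := Real.sqrt_pos.mpr (by positivity)
  rw [abs_le] at *
  constructor <;> nlinarith

lemma g_mono (θ : ℝ) (hθ : |θ| < 1) : StrictMono (fun u : ℝ => u + θ * √(1 + u ^ 2)) := by
  intro u v h
  have h1 := sqrt_lip u v h
  have h2 : |θ * (√(1 + v ^ 2) - √(1 + u ^ 2))| < v - u := by
    rw [abs_mul]
    have := abs_nonneg θ
    have := abs_nonneg (√(1 + v ^ 2) - √(1 + u ^ 2))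
    nlinarith
  have := abs_lt.mp h2
  simp only
  nlinarith

lemma g_val (θ t : ℝ) (hθ : |θ| < 1) :
    (t - θ * √(t ^ 2 + 1 - θ ^ 2)) / (1 - θ ^ 2)
      + θ * √(1 + ((t - θ * √(t ^ 2 + 1 - θ ^ 2)) / (1 - θ ^ 2)) ^ 2) = t := by
  have hd : 0 < 1 - θ ^ 2 := by have := (sq_lt_one_iff_abs_lt_one θ).mpr hθ; linarith
  have hR := Real.sq_sqrt (show 0 ≤ t ^ 2 + 1 - θ ^ 2 by nlinarith [sq_nonneg t])
  have hRt : |t| ≤ √(t ^ 2 + 1 - θ ^ 2) := Real.abs_le_sqrt (by linarith)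
  set R := √(t ^ 2 + 1 - θ ^ 2)
  have h0 : θ * t ≤ R := by
    have : |θ * t| ≤ |t| := by
      rw [abs_mul]; nlinarith [abs_nonneg t]
    linarith [le_abs_self (θ * t)]
  have : √(1 + ((t - θ * R) / (1 - θ ^ 2)) ^ 2) = (R - θ * t) / (1 - θ ^ 2) := by
    rw [Real.sqrt_eq_iff_mul_self_eq (by positivity) (div_nonneg (by linarith) hd.le)]
    field_simp
    have : R ^ 2 = t ^ 2 + 1 - θ ^ 2 := hR
    linear_combination (-(1 - θ ^ 2)) * this
  rw [this]
  field_simp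
  ring

lemma pre_g (a θ t : ℝ) (ha : 0 < a) (hθ : |θ| < 1) :
    (fun x : ℝ => a * x + θ * √(1 + a ^ 2 * x ^ 2)) ⁻¹' (Iic t)
      = Iic ((t - θ * √(t ^ 2 + 1 - θ ^ 2)) / (1 - θ ^ 2) / a) := by
  ext x
  simp only [mem_preimage, mem_Iic]
  rw [le_div_iff₀ ha, ← mul_pow, mul_comm x a]
  have h := (g_mono θ hθ).le_iff_le (a := a * x)
    (b := (t - θ * √(t ^ 2 + 1 - θ ^ 2)) / (1 - θ ^ 2))
  simp only [g_val θ t hθ] at h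
  exact h

lemma pre_h (b t : ℝ) (hb : 0 < b) : (fun x : ℝ => b * x) ⁻¹' (Iic t) = Iic (t / b) := by
  ext x
  simp only [mem_preimage, mem_Iic]
  rw [le_div_iff₀ hb, mul_comm]

lemma cau_add (x y z w : ℝ) (h : arctan x + arctan y = arctan z + arctan w) :
    cau (Iic x) + cau (Iic y) = cau (Iic z) + cau (Iic w) := by
  have hp : ∀ x : ℝ, 0 ≤ π⁻¹ * (arctan x + π / 2) := fun x => by
    have := neg_pi_div_two_lt_arctan x
    have := pi_pos
    exact mul_nonneg (by positivity) (by linarith)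
  simp only [cau_Iic]
  rw [← ENNReal.ofReal_add (hp _) (hp _), ← ENNReal.ofReal_add (hp _) (hp _)]
  congr 1
  linear_combination π⁻¹ * h

lemma cau_main [IsProbabilityMeasure cau] (a θ : ℝ) (ha : 1 ≤ a) (hθ : |θ| < 1) :
    cau.map (fun x : ℝ => a * x + θ * √(1 + a ^ 2 * x ^ 2))
      + cau.map (fun x : ℝ => a * x + (-θ) * √(1 + a ^ 2 * x ^ 2))
    = cau.map (fun x : ℝ => (a + θ * √(a ^ 2 - 1)) * x)
      + cau.map (fun x : ℝ => (a - θ * √(a ^ 2 - 1)) * x) := by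
  have hd : 0 < 1 - θ ^ 2 := by have := (sq_lt_one_iff_abs_lt_one θ).mpr hθ; linarith
  have hs := Real.sq_sqrt (show 0 ≤ a ^ 2 - 1 by nlinarith)
  have hs0 := Real.sqrt_nonneg (a ^ 2 - 1)
  set s := √(a ^ 2 - 1)
  have hsa : s < a := by nlinarith
  have habs : |θ * s| < a := by
    rw [abs_mul, abs_of_nonneg hs0]; nlinarith
  obtain ⟨hb1, hb2⟩ := abs_lt.mp habs
  apply Measure.ext_of_Iic
  intro t
  rw [Measure.add_apply, Measure.add_apply]
  rw [Measure.map_apply (by fun_prop) measurableSet_Iic,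
    Measure.map_apply (by fun_prop) measurableSet_Iic,
    Measure.map_apply (by fun_prop) measurableSet_Iic,
    Measure.map_apply (by fun_prop) measurableSet_Iic,
    pre_g a θ t (by linarith) hθ, pre_g a (-θ) t (by linarith) (by rwa [abs_neg]),
    pre_h _ _ (by linarith), pre_h _ _ (by linarith)]
  apply cau_add
  have hR := Real.sq_sqrt (show 0 ≤ t ^ 2 + 1 - θ ^ 2 by nlinarith [sq_nonneg t])
  rw [neg_sq]
  set R := √(t ^ 2 + 1 - θ ^ 2)
  have p1 : 0 < a + θ * s := by linarith
  have p2 : 0 < a - θ * s := by linarith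
  have p3 : 0 < a := by linarith
  apply aux_arctan _ _ _ _ ((a + θ * s) * (a - θ * s) / (a ^ 2 * (1 - θ ^ 2)))
  · positivity
  · field_simp
    linear_combination θ ^ 2 * hR + (1 - θ ^ 2) * θ ^ 2 * hs
  · field_simp
    ring

lemma cau_neg : cau.map (fun x => -x) = cau := by
  ext S hS
  rw [Measure.map_apply (by fun_prop) hS, cau, withDensity_apply _ hS,
    withDensity_apply _ (measurable_neg hS)]
  have := (Measure.measurePreserving_neg (volume : Measure ℝ)).setLIntegral_comp_preimage hS
    (f := fun x => ENNReal.ofReal (1 / (π * (1 + x ^ 2)))) (by fun_prop)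
  rw [← this]
  simp

lemma cau_main2 [IsProbabilityMeasure cau] (a θ : ℝ) (ha : 1 ≤ |a|) (hθ : |θ| < 1) :
    cau.map (fun x : ℝ => a * x + θ * √(1 + a ^ 2 * x ^ 2))
      + cau.map (fun x : ℝ => a * x + (-θ) * √(1 + a ^ 2 * x ^ 2))
    = cau.map (fun x : ℝ => (a + θ * √(a ^ 2 - 1)) * x)
      + cau.map (fun x : ℝ => (a - θ * √(a ^ 2 - 1)) * x) := by
  rcases le_abs.mp ha with h | h
  · exact cau_main a θ h hθ
  · have := cau_main (-a) θ h hθ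
    have key : ∀ f : ℝ → ℝ, Measurable f → cau.map f = cau.map (fun x => f (-x)) := by
      intro f hf
      conv_lhs => rw [← cau_neg]
      rw [Measure.map_map hf (by fun_prop)]
      rfl
    rw [key _ (by fun_prop), key (fun x => -a * x + -θ * _) (by fun_prop),
      key (fun x => (-a + _) * x) (by fun_prop), key (fun x => (-a - _) * x) (by fun_prop)] at this
    simp only [neg_sq, neg_mul_neg] at this
    rw [this, add_comm]
    congr 2 <;> ext x <;> ring

lemma map_joint {Ω : Type*} [MeasurableSpace Ω] (P : Measure Ω) [IsProbabilityMeasure P]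
    (C ε : Ω → ℝ) (hC : Measurable C) (hε : Measurable ε)
    (hCauchy : P.map C = cau)
    (hRad : P.map ε = ((1:ℝ≥0∞)/2) • Measure.dirac (1:ℝ) + ((1:ℝ≥0∞)/2) • Measure.dirac (-1:ℝ))
    (hindep : IndepFun C ε P) (F : ℝ × ℝ → ℝ) (hF : Measurable F) :
    P.map (fun ω => F (C ω, ε ω)) = ((1:ℝ≥0∞)/2) •
      (cau.map (fun x => F (x, 1)) + cau.map (fun x => F (x, -1))) := by
  have : IsProbabilityMeasure cau := hCauchy ▸ Measure.isProbabilityMeasure_map hC.aemeasurable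
  have h := (indepFun_iff_map_prod_eq_prod_map_map hC.aemeasurable hε.aemeasurable).mp hindep
  have e : P.map (fun ω => F (C ω, ε ω)) = (P.map (fun ω => (C ω, ε ω))).map F := by
    rw [Measure.map_map hF (by fun_prop)]; rfl
  rw [e, h, hCauchy, hRad, Measure.prod_add, Measure.prod_smul_right, Measure.prod_smul_right,
    Measure.prod_dirac, Measure.prod_dirac, Measure.map_add _ _ hF, Measure.map_smul,
    Measure.map_smul, Measure.map_map hF (by fun_prop), Measure.map_map hF (by fun_prop), smul_add]
  rfl

theorem stmt_10 {Ω : Type*} [MeasurableSpace Ω] (P : Measure Ω) [IsProbabilityMeasure P]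
    (C ε : Ω → ℝ) (hC : Measurable C) (hε : Measurable ε)
    (hCauchy : P.map C = volume.withDensity (fun x => ENNReal.ofReal (1 / (π * (1 + x ^ 2)))))
    (hRad : P.map ε = ((1:ℝ≥0∞)/2) • Measure.dirac (1:ℝ) + ((1:ℝ≥0∞)/2) • Measure.dirac (-1:ℝ))
    (hindep : IndepFun C ε P)
    (a θ : ℝ) (ha : 1 ≤ |a|) (hθ : θ ∈ Icc (-1:ℝ) 1) :
    P.map (fun ω => a * C ω + θ * Real.sqrt (1 + a ^ 2 * C ω ^ 2) * ε ω)
      = P.map (fun ω => (a + θ * Real.sqrt (a ^ 2 - 1) * ε ω) * C ω) := by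
  have hcau : IsProbabilityMeasure cau := by
    have : P.map C = cau := hCauchy
    exact this ▸ Measure.isProbabilityMeasure_map hC.aemeasurable
  have strict : ∀ θ : ℝ, |θ| < 1 →
      P.map (fun ω => a * C ω + θ * Real.sqrt (1 + a ^ 2 * C ω ^ 2) * ε ω)
      = P.map (fun ω => (a + θ * Real.sqrt (a ^ 2 - 1) * ε ω) * C ω) := by
    intro θ hθ
    have h1 := map_joint P C ε hC hε hCauchy hRad hindep
      (fun p => a * p.1 + θ * Real.sqrt (1 + a ^ 2 * p.1 ^ 2) * p.2) (by fun_prop)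
    have h2 := map_joint P C ε hC hε hCauchy hRad hindep
      (fun p => (a + θ * Real.sqrt (a ^ 2 - 1) * p.2) * p.1) (by fun_prop)
    simp only at h1 h2
    rw [h1, h2]
    have h3 := cau_main2 a θ ha hθ
    congr 1
    convert h3 using 3
    · ext x; ring
    · ext x; ring
    · ext x; ring
    · ext x; ring
  have hθ' : |θ| ≤ 1 := abs_le.mpr hθ
  let r : ℕ → ℝ := fun n => (1 - 1 / ((n : ℝ) + 1)) * θ
  have hr : ∀ n, |r n| < 1 := by
    intro n
    have h1 : 0 < 1 / ((n : ℝ) + 1) := by positivity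
    have h2 : 1 / ((n : ℝ) + 1) ≤ 1 := by
      rw [div_le_one (by positivity)]
      linarith [(Nat.cast_nonneg n : (0 : ℝ) ≤ n)]
    simp only [r]
    rw [abs_mul, abs_of_nonneg (by linarith)]
    nlinarith [abs_nonneg θ]
  have hlim : Filter.Tendsto r Filter.atTop (nhds θ) := by
    have := (tendsto_one_div_add_atTop_nhds_zero_nat (𝕜 := ℝ)).const_sub 1
    simpa [r] using this.mul_const θ
  have : IsProbabilityMeasure
      (P.map (fun ω => a * C ω + θ * Real.sqrt (1 + a ^ 2 * C ω ^ 2) * ε ω)) :=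
    Measure.isProbabilityMeasure_map (by fun_prop)
  have : IsProbabilityMeasure
      (P.map (fun ω => (a + θ * Real.sqrt (a ^ 2 - 1) * ε ω) * C ω)) :=
    Measure.isProbabilityMeasure_map (by fun_prop)
  apply ext_of_forall_integral_eq_of_IsFiniteMeasure
  intro f
  have conv : ∀ G : ℝ → Ω → ℝ, (∀ θ, Measurable (G θ)) → (∀ ω, Continuous (fun θ => G θ ω)) →
      Filter.Tendsto (fun n => ∫ x, f x ∂(P.map (G (r n)))) Filter.atTop
        (nhds (∫ x, f x ∂(P.map (G θ)))) := by
    intro G hG hGc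
    have e : ∀ θ, ∫ x, f x ∂(P.map (G θ)) = ∫ ω, f (G θ ω) ∂P := fun θ =>
      integral_map (hG θ).aemeasurable f.continuous.aestronglyMeasurable
    simp only [e]
    apply tendsto_integral_of_dominated_convergence (fun _ => ‖f‖)
    · intro n
      exact (f.continuous.measurable.comp (hG _)).aestronglyMeasurable
    · exact integrable_const _
    · intro n
      exact ae_of_all _ fun ω => f.norm_coe_le_norm _
    · exact ae_of_all _ fun ω => ((f.continuous.comp (hGc ω)).tendsto θ).comp hlim
  have c1 := conv (fun θ ω => a * C ω + θ * Real.sqrt (1 + a ^ 2 * C ω ^ 2) * ε ω)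
    (fun θ => by fun_prop) (fun ω => by fun_prop)
  have c2 := conv (fun θ ω => (a + θ * Real.sqrt (a ^ 2 - 1) * ε ω) * C ω)
    (fun θ => by fun_prop) (fun ω => by fun_prop)
  refine tendsto_nhds_unique c1 (c2.congr fun n => ?_)
  rw [strict (r n) (hr n)]
end

section
/- Let C be a standard Cauchy random variable and ε an independent Rademacher variable. Then for every a, θ ∈ [-1, 1], the random variable aC + θ√(1 + a²C²) ε has the same distribution as aC + θ√(1 − a²) ε. Equivalently, both have characteristic function ξ ↦ exp(−|aξ|) cos(θ ξ √(1 − a²)). -/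
open MeasureTheory Real Set ProbabilityTheory
open scoped ENNReal

noncomputable def cauchyLaw : Measure ℝ :=
  volume.withDensity (fun x => ENNReal.ofReal (1 / (π * (1 + x ^ 2))))

lemma cauchyLaw_Iic (t : ℝ) : cauchyLaw (Iic t) = ENNReal.ofReal ((arctan t + π / 2) / π) := by
  rw [cauchyLaw, withDensity_apply _ measurableSet_Iic, ← ofReal_integral_eq_lintegral_ofReal]
  · congr 1
    have : ∀ x : ℝ, 1 / (π * (1 + x ^ 2)) = π⁻¹ * (1 + x ^ 2)⁻¹ := by intro x; field_simp
    simp_rw [this]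
    rw [integral_const_mul, integral_Iic_inv_one_add_sq]
    field_simp
  · have : ∀ x : ℝ, 1 / (π * (1 + x ^ 2)) = π⁻¹ * (1 + x ^ 2)⁻¹ := by intro x; field_simp
    simp_rw [this]
    exact (integrable_inv_one_add_sq.const_mul _).integrableOn
  · exact Filter.Eventually.of_forall fun x => by positivity

lemma cauchyLaw_Ici (t : ℝ) : cauchyLaw (Ici t) = ENNReal.ofReal ((arctan (-t) + π / 2) / π) := by
  rw [cauchyLaw, withDensity_apply _ measurableSet_Ici, ← ofReal_integral_eq_lintegral_ofReal]
  · congr 1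
    have : ∀ x : ℝ, 1 / (π * (1 + x ^ 2)) = π⁻¹ * (1 + x ^ 2)⁻¹ := by intro x; field_simp
    simp_rw [this]
    rw [integral_const_mul, integral_Ici_eq_integral_Ioi, integral_Ioi_inv_one_add_sq, arctan_neg]
    field_simp
    ring
  · have : ∀ x : ℝ, 1 / (π * (1 + x ^ 2)) = π⁻¹ * (1 + x ^ 2)⁻¹ := by intro x; field_simp
    simp_rw [this]
    exact (integrable_inv_one_add_sq.const_mul _).integrableOn
  · exact Filter.Eventually.of_forall fun x => by positivity

lemma cauchyLaw_scaled (a t : ℝ) (ha : a ≠ 0) :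
    cauchyLaw {x | a * x ≤ t} = ENNReal.ofReal ((arctan (t / |a|) + π / 2) / π) := by
  rcases lt_or_gt_of_ne ha with h | h
  · have : {x | a * x ≤ t} = Ici (t / a) := by
      ext x; simp only [mem_ofPred_eq, mem_Ici]; rw [div_le_iff_of_neg h, mul_comm]
    rw [this, cauchyLaw_Ici, abs_of_neg h, div_neg]
  · have : {x | a * x ≤ t} = Iic (t / a) := by
      ext x; simp only [mem_ofPred_eq, mem_Iic]; rw [le_div_iff₀ h, mul_comm]
    rw [this, cauchyLaw_Iic, abs_of_pos h]

lemma cauchyLaw_univ : cauchyLaw univ = 1 := by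
  rw [cauchyLaw, withDensity_apply _ MeasurableSet.univ, ← ofReal_integral_eq_lintegral_ofReal]
  · have : ∀ x : ℝ, 1 / (π * (1 + x ^ 2)) = π⁻¹ * (1 + x ^ 2)⁻¹ := by intro x; field_simp
    simp_rw [this]
    rw [Measure.restrict_univ, integral_const_mul, integral_univ_inv_one_add_sq]
    rw [inv_mul_cancel₀ pi_ne_zero, ENNReal.ofReal_one]
  · have : ∀ x : ℝ, 1 / (π * (1 + x ^ 2)) = π⁻¹ * (1 + x ^ 2)⁻¹ := by intro x; field_simp
    simp_rw [this]
    exact (integrable_inv_one_add_sq.const_mul _).integrableOn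
  · exact Filter.Eventually.of_forall fun x => by positivity

/-- Solving `x + θ √(1+x²) ≤ y` for `|θ| < 1`. -/
lemma solve_le (θ y x : ℝ) (h1 : -1 < θ) (h2 : θ < 1) :
    x + θ * √(1 + x ^ 2) ≤ y ↔ x ≤ (y - θ * √(y ^ 2 + 1 - θ ^ 2)) / (1 - θ ^ 2) := by
  have hd : 0 < 1 - θ ^ 2 := by nlinarith
  set R := √(y ^ 2 + 1 - θ ^ 2) with hR
  have hR2 : R ^ 2 = y ^ 2 + 1 - θ ^ 2 := Real.sq_sqrt (by nlinarith)
  have hR0 : 0 ≤ R := Real.sqrt_nonneg _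
  set z := (y - θ * R) / (1 - θ ^ 2) with hz
  have hRy : 0 ≤ R - θ * y := by
    have : |θ * y| ≤ R := abs_le_of_sq_le_sq (by nlinarith [mul_nonneg hd.le (sq_nonneg y)]) hR0
    linarith [le_abs_self (θ * y)]
  have hs : √(1 + z ^ 2) = (R - θ * y) / (1 - θ ^ 2) := by
    rw [Real.sqrt_eq_iff_mul_self_eq (by positivity) (by positivity), hz]
    field_simp
    linear_combination -(1 - θ ^ 2) * hR2
  have hfz : z + θ * √(1 + z ^ 2) = y := by
    rw [hs, hz]; field_simp; ring
  have mono : StrictMono (fun x : ℝ => x + θ * √(1 + x ^ 2)) := by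
    intro u v huv
    have hu := Real.sqrt_nonneg (1 + u ^ 2)
    have hv := Real.sqrt_nonneg (1 + v ^ 2)
    have hu2 := Real.sq_sqrt (show 0 ≤ 1 + u ^ 2 by positivity)
    have hv2 := Real.sq_sqrt (show 0 ≤ 1 + v ^ 2 by positivity)
    show u + θ * √(1 + u ^ 2) < v + θ * √(1 + v ^ 2)
    set p := √(1 + u ^ 2)
    set q := √(1 + v ^ 2)
    have hpu : |u| ≤ p := Real.abs_le_sqrt (by linarith)
    have hqv : |v| ≤ q := Real.abs_le_sqrt (by linarith)
    have hpq : 1 + u * v ≤ p * q := by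
      refine le_of_abs_le (abs_le_of_sq_le_sq ?_ (mul_nonneg hu hv))
      rw [mul_pow, hu2, hv2]; nlinarith [sq_nonneg (u - v)]
    have hle : |p - q| ≤ |v - u| := sq_le_sq.mp (by nlinarith)
    rw [abs_of_pos (sub_pos.mpr huv)] at hle
    obtain ⟨l1, l2⟩ := abs_le.mp hle
    have t1 : |θ * (p - q)| < v - u := by
      rw [abs_mul]
      have : |θ| < 1 := abs_lt.mpr ⟨h1, h2⟩
      nlinarith [abs_nonneg θ, abs_nonneg (p - q)]
    nlinarith [le_abs_self (θ * (p - q))]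
  rw [← hfz]
  exact mono.le_iff_le

lemma arctan_eq_arg (a x : ℝ) (ha : 0 < a) : arctan (x / a) = Complex.arg ⟨a, x⟩ := by
  have h : |Complex.arg ⟨a, x⟩| < π / 2 := Complex.abs_arg_lt_pi_div_two_iff.mpr (Or.inl ha)
  have := Complex.tan_arg ⟨a, x⟩
  simp only at this
  rw [← this, arctan_tan (abs_lt.mp h).1 (abs_lt.mp h).2]

lemma arg_sum (a x y : ℝ) (ha : 0 < a) :
    arctan (x / a) + arctan (y / a) = Complex.arg (⟨a, x⟩ * ⟨a, y⟩) := by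
  have hx : (⟨a, x⟩ : ℂ) ≠ 0 := fun h => ha.ne' (congrArg Complex.re h)
  have hy : (⟨a, y⟩ : ℂ) ≠ 0 := fun h => ha.ne' (congrArg Complex.re h)
  rw [Complex.arg_mul hx hy, arctan_eq_arg a x ha, arctan_eq_arg a y ha]
  rw [← arctan_eq_arg a x ha, ← arctan_eq_arg a y ha]
  constructor <;> linarith [neg_pi_div_two_lt_arctan (x / a), arctan_lt_pi_div_two (x / a),
    neg_pi_div_two_lt_arctan (y / a), arctan_lt_pi_div_two (y / a)]

lemma arg_prod (a x y u v c : ℝ) (ha : 0 < a) (hc : 0 < c)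
    (h1 : c * (a * a - x * y) = a * a - u * v) (h2 : c * (x + y) = u + v) :
    arctan (x / a) + arctan (y / a) = arctan (u / a) + arctan (v / a) := by
  rw [arg_sum a x y ha, arg_sum a u v ha, ← Complex.arg_real_mul _ hc]
  congr 1
  apply Complex.ext
  · simpa using h1
  · simp; linear_combination a * h2

lemma arg_prod' (a x u v c : ℝ) (ha : 0 < a) (hc : 0 < c)
    (h1 : c * (- x) = a * a - u * v) (h2 : c * a = a * (u + v)) :
    π / 2 + arctan (x / a) = arctan (u / a) + arctan (v / a) := by
  have hx : (⟨a, x⟩ : ℂ) ≠ 0 := fun h => ha.ne' (congrArg Complex.re h)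
  have e : π / 2 + arctan (x / a) = Complex.arg (Complex.I * ⟨a, x⟩) := by
    rw [Complex.arg_mul Complex.I_ne_zero hx, arctan_eq_arg a x ha, Complex.arg_I]
    rw [Complex.arg_I, ← arctan_eq_arg a x ha]
    constructor <;> linarith [neg_pi_div_two_lt_arctan (x / a), arctan_lt_pi_div_two (x / a), pi_pos]
  rw [e, arg_sum a u v ha, ← Complex.arg_real_mul _ hc]
  congr 1
  apply Complex.ext
  · simpa using h1
  · simp; linear_combination h2

lemma cdf_nonneg (t : ℝ) : 0 ≤ (arctan t + π / 2) / π :=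
  div_nonneg (by linarith [neg_pi_div_two_lt_arctan t]) pi_pos.le

lemma core (a θ y : ℝ) (ha0 : a ≠ 0) (ha : a ∈ Icc (-1:ℝ) 1) (hθ : 0 ≤ θ) (hθ1 : θ ≤ 1) :
    cauchyLaw {x | a * x + θ * √(1 + a ^ 2 * x ^ 2) * 1 ≤ y} +
      cauchyLaw {x | a * x + θ * √(1 + a ^ 2 * x ^ 2) * (-1) ≤ y} =
    cauchyLaw {x | a * x + θ * √(1 - a ^ 2) * 1 ≤ y} +
      cauchyLaw {x | a * x + θ * √(1 - a ^ 2) * (-1) ≤ y} := by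
  have hb : √(1 - a ^ 2) ^ 2 = 1 - a ^ 2 := Real.sq_sqrt (by nlinarith [ha.1, ha.2])
  set b := √(1 - a ^ 2)
  have hA : 0 < |a| := abs_pos.mpr ha0
  have hAA : |a| * |a| = a ^ 2 := by rw [abs_mul_abs_self]; ring
  have r1 : {x | a * x + θ * b * 1 ≤ y} = {x | a * x ≤ y - θ * b} := by
    ext x; simp only [mem_ofPred_eq]; constructor <;> intro h <;> linarith
  have r2 : {x | a * x + θ * b * (-1) ≤ y} = {x | a * x ≤ y + θ * b} := by
    ext x; simp only [mem_ofPred_eq]; constructor <;> intro h <;> linarith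
  rw [r1, r2, cauchyLaw_scaled _ _ ha0, cauchyLaw_scaled _ _ ha0,
    ← ENNReal.ofReal_add (cdf_nonneg _) (cdf_nonneg _)]
  rcases lt_or_eq_of_le hθ1 with h | h
  · have hd : 0 < 1 - θ ^ 2 := by nlinarith
    have l1 : {x | a * x + θ * √(1 + a ^ 2 * x ^ 2) * 1 ≤ y} =
        {x | a * x ≤ (y - θ * √(y ^ 2 + 1 - θ ^ 2)) / (1 - θ ^ 2)} := by
      ext x; simp only [mem_ofPred_eq]
      rw [← solve_le θ y (a * x) (by linarith) h, mul_pow, mul_one]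
    have l2 : {x | a * x + θ * √(1 + a ^ 2 * x ^ 2) * (-1) ≤ y} =
        {x | a * x ≤ (y + θ * √(y ^ 2 + 1 - θ ^ 2)) / (1 - θ ^ 2)} := by
      ext x; simp only [mem_ofPred_eq]
      have := solve_le (-θ) y (a * x) (by linarith) (by linarith)
      rw [neg_sq, mul_pow] at this
      rw [show a * x + θ * √(1 + a ^ 2 * x ^ 2) * (-1) = a * x + -θ * √(1 + a ^ 2 * x ^ 2) by ring,
        this, neg_mul, sub_neg_eq_add]
    rw [l1, l2, cauchyLaw_scaled _ _ ha0, cauchyLaw_scaled _ _ ha0,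
      ← ENNReal.ofReal_add (cdf_nonneg _) (cdf_nonneg _)]
    have hR2 : √(y ^ 2 + 1 - θ ^ 2) ^ 2 = y ^ 2 + 1 - θ ^ 2 := Real.sq_sqrt (by nlinarith)
    set R := √(y ^ 2 + 1 - θ ^ 2)
    have := arg_prod |a| ((y - θ * R) / (1 - θ ^ 2)) ((y + θ * R) / (1 - θ ^ 2))
      (y - θ * b) (y + θ * b) (1 - θ ^ 2) hA hd
      (by rw [hAA]; field_simp; linear_combination θ ^ 2 * hR2 - (1 - θ ^ 2) * θ ^ 2 * hb)
      (by field_simp; ring)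
    congr 1
    rw [← add_div, ← add_div]
    congr 1
    linarith
  · subst h
    have sq : ∀ x : ℝ, √(1 + x ^ 2) ^ 2 = 1 + x ^ 2 := fun x => Real.sq_sqrt (by positivity)
    have sp : ∀ x : ℝ, 0 < √(1 + x ^ 2) := fun x => Real.sqrt_pos.mpr (by positivity)
    have sa : ∀ x : ℝ, |x| < √(1 + x ^ 2) := fun x => Real.lt_sqrt_of_sq_lt (by rw [sq_abs]; linarith)
    have s1 : ∀ x, x < √(1 + x ^ 2) := fun x => (le_abs_self x).trans_lt (sa x)
    have s2 : ∀ x, -x < √(1 + x ^ 2) := fun x => (neg_le_abs x).trans_lt (sa x)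
    simp_rw [← mul_pow]
    rcases lt_trichotomy y 0 with hy | hy | hy
    · have l1 : {x | a * x + 1 * √(1 + (a * x) ^ 2) * 1 ≤ y} = ∅ := by
        ext x; simp only [mem_ofPred_eq, mem_empty_iff_false, iff_false]
        linarith [s2 (a * x)]
      have l2 : {x | a * x + 1 * √(1 + (a * x) ^ 2) * (-1) ≤ y} =
          {x | a * x ≤ (y ^ 2 - 1) / (2 * y)} := by
        ext x; simp only [mem_ofPred_eq]
        generalize a * x = z
        rw [le_div_iff_of_neg (by linarith)]
        have q := sq z
        have p := sp z
        have p1 := s1 z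
        have p2 := s2 z
        set r := √(1 + z ^ 2)
        constructor <;> intro h
        · by_cases hzy : z ≤ y
          · nlinarith
          · nlinarith
        · by_contra! hc
          nlinarith
      rw [l1, l2, cauchyLaw_scaled _ _ ha0, measure_empty, zero_add]
      have := arg_prod' |a| (-((y ^ 2 - 1) / (2 * y))) (-(y - 1 * b)) (-(y + 1 * b)) (-(2 * y)) hA
        (by linarith) (by rw [hAA]; have hy' := hy.ne; field_simp; linear_combination -hb) (by ring)
      simp only [neg_div, arctan_neg] at this
      congr 1
      rw [← add_div]
      congr 1
      linarith
    · subst hy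
      have l1 : {x | a * x + 1 * √(1 + (a * x) ^ 2) * 1 ≤ 0} = ∅ := by
        ext x; simp only [mem_ofPred_eq, mem_empty_iff_false, iff_false]
        linarith [s2 (a * x)]
      have l2 : {x | a * x + 1 * √(1 + (a * x) ^ 2) * (-1) ≤ 0} = univ := by
        ext x; simp only [mem_ofPred_eq, mem_univ, iff_true]
        linarith [s1 (a * x)]
      rw [l1, l2, measure_empty, cauchyLaw_univ, zero_add, zero_add, zero_sub, neg_div, arctan_neg,
        ← add_div, eq_comm, ENNReal.ofReal_eq_one, div_eq_one_iff_eq pi_ne_zero]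
      ring
    · have l1 : {x | a * x + 1 * √(1 + (a * x) ^ 2) * 1 ≤ y} =
          {x | a * x ≤ (y ^ 2 - 1) / (2 * y)} := by
        ext x; simp only [mem_ofPred_eq]
        generalize a * x = z
        rw [le_div_iff₀ (by linarith)]
        have q := sq z
        have p := sp z
        have p1 := s1 z
        have p2 := s2 z
        set r := √(1 + z ^ 2)
        constructor <;> intro h
        · nlinarith
        · by_contra! hc
          by_cases hzy : z ≤ y
          · nlinarith
          · nlinarith
      have l2 : {x | a * x + 1 * √(1 + (a * x) ^ 2) * (-1) ≤ y} = univ := by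
        ext x; simp only [mem_ofPred_eq, mem_univ, iff_true]
        linarith [s1 (a * x)]
      rw [l1, l2, cauchyLaw_scaled _ _ ha0, cauchyLaw_univ, ← ENNReal.ofReal_one,
        ← ENNReal.ofReal_add (cdf_nonneg _) zero_le_one]
      have := arg_prod' |a| ((y ^ 2 - 1) / (2 * y)) (y - 1 * b) (y + 1 * b) (2 * y) hA
        (by linarith) (by rw [hAA]; field_simp; linear_combination -hb) (by ring)
      congr 1
      field_simp at this ⊢
      linarith

theorem stmt_11 {Ω : Type*} [MeasurableSpace Ω] (P : Measure Ω) [IsProbabilityMeasure P]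
    (C ε : Ω → ℝ) (hC : Measurable C) (hε : Measurable ε)
    (hCauchy : P.map C = volume.withDensity (fun x => ENNReal.ofReal (1 / (π * (1 + x ^ 2)))))
    (hRad : P.map ε = ((1:ℝ≥0∞)/2) • Measure.dirac (1:ℝ) + ((1:ℝ≥0∞)/2) • Measure.dirac (-1:ℝ))
    (hindep : IndepFun C ε P)
    (a θ : ℝ) (ha : a ∈ Icc (-1:ℝ) 1) (hθ : θ ∈ Icc (-1:ℝ) 1) :
    P.map (fun ω => a * C ω + θ * Real.sqrt (1 + a ^ 2 * C ω ^ 2) * ε ω)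
      = P.map (fun ω => a * C ω + θ * Real.sqrt (1 - a ^ 2) * ε ω) := by
  have hCl : P.map C = cauchyLaw := hCauchy
  have : IsProbabilityMeasure cauchyLaw := ⟨cauchyLaw_univ⟩
  have key : ∀ g : ℝ × ℝ → ℝ, Measurable g → ∀ y, P.map (fun ω => g (C ω, ε ω)) (Iic y) =
      (1 / 2 : ℝ≥0∞) * (cauchyLaw {x | g (x, 1) ≤ y} + cauchyLaw {x | g (x, -1) ≤ y}) := by
    intro g hg y
    have hj := (indepFun_iff_map_prod_eq_prod_map_map hC.aemeasurable hε.aemeasurable).mp hindep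
    have e : P.map (fun ω => g (C ω, ε ω)) = (P.map (fun ω => (C ω, ε ω))).map g := by
      rw [Measure.map_map hg (hC.prodMk hε)]; rfl
    have hm : MeasurableSet (g ⁻¹' Iic y) := hg measurableSet_Iic
    rw [e, hj, hCl, hRad, Measure.map_apply hg measurableSet_Iic,
      Measure.prod_apply_symm hm]
    rw [lintegral_add_measure, lintegral_smul_measure, lintegral_smul_measure,
      lintegral_dirac, lintegral_dirac, smul_eq_mul, smul_eq_mul, mul_add]
    rfl
  by_cases ha0 : a = 0
  · subst ha0; simp
  have : IsProbabilityMeasure (P.map (fun ω => a * C ω + θ * Real.sqrt (1 + a ^ 2 * C ω ^ 2) * ε ω)) :=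
    Measure.isProbabilityMeasure_map (by fun_prop)
  refine Measure.ext_of_Iic _ _ fun y => ?_
  rw [key (fun p => a * p.1 + θ * √(1 + a ^ 2 * p.1 ^ 2) * p.2) (by fun_prop) y,
    key (fun p => a * p.1 + θ * √(1 - a ^ 2) * p.2) (by fun_prop) y]
  congr 1
  rcases le_total 0 θ with h | h
  · exact core a θ y ha0 ha h hθ.2
  · have := core a (-θ) y ha0 ha (by linarith) (by linarith [hθ.1])
    rw [add_comm, add_comm (cauchyLaw {x | a * x + -θ * √(1 - a ^ 2) * 1 ≤ y})] at this
    simpa using this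
end
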